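/- (Stationary state of model A with periodic boundary conditions is a product measure.) Let p1, p2 ≥ 0, ρ ∈ [0,1], and L ≥ 3. Let h be the local transition matrix of range 3 on 2 states of model A, and let H^(p)_L be the corresponding periodic stochastic Hamiltonian. Then the product (Bernoulli) function P on configurations, defined by P(σ) = Π_{k=0}^{L−1} w(σ(k)), where w(1) = ρ and w(0) = 1−ρ, satisfies H^(p)_L P = 0; i.e. the Bernoulli product measure with density ρ is a stationary state of model A on the ring of L sites. -/

import Mathlib

open Finset

noncomputable section

/-- The configuration `σ` with the values at sites `k, k+1, …, k+r-1` (taken mod `L`)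
replaced by the tuple `τ`. -/
def updateConfig (L m r : ℕ) (σ : Fin L → Fin m) (k : ℕ) (τ : Fin r → Fin m) :
    Fin L → Fin m :=
  fun i => if h : ∃ j : Fin r, (i : ℕ) = (k + (j : ℕ)) % L then τ h.choose else σ i

/-- The periodic stochastic Hamiltonian with bulk interaction of range `r`, acting on
real-valued functions of configurations of a ring of `L` sites with `m` states per site. -/
def Hper (L m r : ℕ) (h : (Fin r → Fin m) → (Fin r → Fin m) → ℝ)
    (f : (Fin L → Fin m) → ℝ) : (Fin L → Fin m) → ℝ :=
  fun σ => ∑ k : Fin L, ∑ τ : Fin r → Fin m,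
    h (fun j => σ ⟨((k : ℕ) + (j : ℕ)) % L, Nat.mod_lt _ k.pos⟩) τ *
      f (updateConfig L m r σ (k : ℕ) τ)

/-- The open-chain stochastic Hamiltonian with bulk interaction `hb` of range `r` and
boundary interactions `hl`, `hr` of range `r-1`, acting on real-valued functions of
configurations of a chain of `L` sites with `m` states per site. -/
def Hopen (L m r : ℕ) (hL : 0 < L)
    (hb : (Fin r → Fin m) → (Fin r → Fin m) → ℝ)
    (hl hr : (Fin (r - 1) → Fin m) → (Fin (r - 1) → Fin m) → ℝ)
    (f : (Fin L → Fin m) → ℝ) : (Fin L → Fin m) → ℝ :=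
  fun σ =>
    (∑ τ : Fin (r - 1) → Fin m,
      hl (fun j => σ ⟨(j : ℕ) % L, Nat.mod_lt _ hL⟩) τ *
        f (updateConfig L m (r - 1) σ 0 τ))
    + (∑ k ∈ Finset.range (L - r + 1), ∑ τ : Fin r → Fin m,
      hb (fun j => σ ⟨(k + (j : ℕ)) % L, Nat.mod_lt _ hL⟩) τ *
        f (updateConfig L m r σ k τ))
    + (∑ τ : Fin (r - 1) → Fin m,
      hr (fun j => σ ⟨((L - (r - 1)) + (j : ℕ)) % L, Nat.mod_lt _ hL⟩) τ *
        f (updateConfig L m (r - 1) σ (L - (r - 1)) τ))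

/-- The local transition matrix associated to a family of transition rates `w`:
`h[τ',τ] = -w(τ→τ')` off the diagonal and `h[τ,τ] = ∑_{τ'≠τ} w(τ→τ')`. -/
def rateToH {m k : ℕ} (w : (Fin k → Fin m) → (Fin k → Fin m) → ℝ) :
    (Fin k → Fin m) → (Fin k → Fin m) → ℝ :=
  fun a b => if a = b then ∑ c ∈ Finset.univ.filter (fun c => c ≠ a), w a c else -(w b a)

/-- The bulk transition rates of **model A**: `(1,0,0)→(0,1,0)` at rate `p1`,
`(1,0,1)→(0,1,1)` at rate `p1`, and `(1,0,0)→(0,0,1)` at rate `p2`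
(state `1` = particle, state `0` = empty). -/
def rateA (p1 p2 : ℝ) : (Fin 3 → Fin 2) → (Fin 3 → Fin 2) → ℝ :=
  fun τ τ' =>
    if τ = ![1, 0, 0] ∧ τ' = ![0, 1, 0] then p1
    else if τ = ![1, 0, 1] ∧ τ' = ![0, 1, 1] then p1
    else if τ = ![1, 0, 0] ∧ τ' = ![0, 0, 1] then p2
    else 0

/-- The local transition matrix of range 3 of model A. -/
def hA (p1 p2 : ℝ) : (Fin 3 → Fin 2) → (Fin 3 → Fin 2) → ℝ := rateToH (rateA p1 p2)

/-!
Every move of model A exchanges a particle with a hole, so a product weight takes the same value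
before and after it. Hence the contribution of the window starting at site `k` to `H P` is `P σ`
times the escape rate minus the entry rate of that window. For model A this difference is
a discrete gradient `V (σ k, σ (k+1)) - V (σ (k+1), σ (k+2))`, with `V (a, b) = p1 a + p2 (a ∨ b)`,
and the sum of a gradient around the ring vanishes.
-/

section Ring

variable {L m r : ℕ}

/-- The `r`-tuple of states that `σ` takes at the sites `k, k+1, …, k+r-1` of the ring. The starting
site `k` is a natural number read modulo `L`, so that sums over windows telescope in `ℕ`. -/
def window [NeZero L] (r : ℕ) (σ : Fin L → Fin m) (k : ℕ) : Fin r → Fin m :=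
  fun j => σ (Fin.ofNat L (k + j))

theorem init_window [NeZero L] (n : ℕ) (σ : Fin L → Fin m) (k : ℕ) :
    Fin.init (window (n + 1) σ k) = window n σ k :=
  rfl

theorem tail_window [NeZero L] (n : ℕ) (σ : Fin L → Fin m) (k : ℕ) :
    Fin.tail (window (n + 1) σ k) = window n σ (k + 1) := by
  funext j
  simp only [Fin.tail, window, Fin.val_succ, add_assoc, add_comm 1]

theorem window_length [NeZero L] (r : ℕ) (σ : Fin L → Fin m) :
    window r σ L = window r σ 0 := by
  funext j
  simp only [window, Fin.ofNat, Nat.add_mod_left, zero_add]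

theorem injective_ofNat_add [NeZero L] (hr : r ≤ L) (k : ℕ) :
    Function.Injective fun j : Fin r => Fin.ofNat L (k + j) := by
  intro a b hab
  have hmod : (a : ℕ) ≡ b [MOD L] := Nat.ModEq.add_left_cancel' k (congrArg Fin.val hab)
  exact Fin.ext (hmod.eq_of_lt_of_lt (a.isLt.trans_le hr) (b.isLt.trans_le hr))

theorem updateConfig_apply_ofNat_add [NeZero L] (hr : r ≤ L) (σ : Fin L → Fin m) (k : ℕ)
    (τ : Fin r → Fin m) (j : Fin r) :
    updateConfig L m r σ k τ (Fin.ofNat L (k + j)) = τ j := by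
  have hex : ∃ j' : Fin r, (Fin.ofNat L (k + j) : ℕ) = (k + j') % L := ⟨j, rfl⟩
  rw [updateConfig, dif_pos hex]
  exact congrArg τ (injective_ofNat_add hr k (Fin.ext hex.choose_spec)).symm

theorem updateConfig_apply_of_forall_ne [NeZero L] (σ : Fin L → Fin m) (k : ℕ)
    (τ : Fin r → Fin m) {i : Fin L} (hi : ∀ j : Fin r, Fin.ofNat L (k + j) ≠ i) :
    updateConfig L m r σ k τ i = σ i :=
  dif_neg fun ⟨j, hj⟩ => hi j (Fin.ext hj.symm)

theorem updateConfig_window [NeZero L] (σ : Fin L → Fin m) (k : ℕ) :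
    updateConfig L m r σ k (window r σ k) = σ := by
  funext i
  unfold updateConfig
  split_ifs with hex
  · exact congrArg σ (Fin.ext hex.choose_spec.symm)
  · rfl

theorem prod_updateConfig [NeZero L] {M : Type*} [CommMonoid M] (hr : r ≤ L) (w : Fin m → M)
    (σ : Fin L → Fin m) (k : ℕ) (τ : Fin r → Fin m) :
    ∏ i, w (updateConfig L m r σ k τ i) =
      (∏ j, w (τ j)) * ∏ i ∈ (univ.image fun j : Fin r => Fin.ofNat L (k + j))ᶜ, w (σ i) := by
  rw [← prod_mul_prod_compl (univ.image fun j : Fin r => Fin.ofNat L (k + j)),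
    prod_image (injective_ofNat_add hr k).injOn]
  congr 1
  · simp only [updateConfig_apply_ofNat_add hr]
  · refine prod_congr rfl fun i hi => ?_
    rw [updateConfig_apply_of_forall_ne]
    simpa using hi

theorem Hper_apply [NeZero L] (h : (Fin r → Fin m) → (Fin r → Fin m) → ℝ)
    (f : (Fin L → Fin m) → ℝ) (σ : Fin L → Fin m) :
    Hper L m r h f σ =
      ∑ k ∈ range L, ∑ τ, h (window r σ k) τ * f (updateConfig L m r σ k τ) :=
  Fin.sum_univ_eq_sum_range
    (fun k => ∑ τ, h (window r σ k) τ * f (updateConfig L m r σ k τ)) L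

theorem sum_mul_prod_updateConfig [NeZero L] (hr : r ≤ L) {g : (Fin r → Fin m) → ℝ}
    {w : Fin m → ℝ} {σ : Fin L → Fin m} {k : ℕ} {c : ℝ}
    (hg : ∑ τ, g τ * ∏ j, w (τ j) = c * ∏ j, w (window r σ k j)) :
    ∑ τ, g τ * ∏ i, w (updateConfig L m r σ k τ i) = c * ∏ i, w (σ i) := by
  have hσ := prod_updateConfig hr w σ k (window r σ k)
  rw [updateConfig_window] at hσ
  simp only [prod_updateConfig hr, ← mul_assoc]
  rw [← sum_mul, hg, hσ, mul_assoc]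

theorem Hper_prod_eq_zero_of_local_gradient {n : ℕ} (hn : n + 1 ≤ L)
    {h : (Fin (n + 1) → Fin m) → (Fin (n + 1) → Fin m) → ℝ} {w : Fin m → ℝ}
    (V : (Fin n → Fin m) → ℝ)
    (hV : ∀ a, ∑ τ, h a τ * ∏ j, w (τ j) = (V (Fin.init a) - V (Fin.tail a)) * ∏ j, w (a j)) :
    Hper L m (n + 1) h (fun σ => ∏ k, w (σ k)) = 0 := by
  have : NeZero L := ⟨by omega⟩
  funext σ
  calc Hper L m (n + 1) h (fun σ => ∏ k, w (σ k)) σ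
    _ = ∑ k ∈ range L, (V (window n σ k) - V (window n σ (k + 1))) * ∏ i, w (σ i) := by
      rw [Hper_apply]
      refine sum_congr rfl fun k _ => sum_mul_prod_updateConfig hn ?_
      rw [hV, init_window, tail_window]
    _ = (V (window n σ 0) - V (window n σ L)) * ∏ i, w (σ i) := by
      rw [← sum_mul, sum_range_sub']
    _ = 0 := by
      rw [window_length, sub_self, zero_mul]

end Ring

section Rates

variable {m r : ℕ} (w : (Fin r → Fin m) → (Fin r → Fin m) → ℝ)

theorem sum_rateToH_mul (f : (Fin r → Fin m) → ℝ) (a : Fin r → Fin m) :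
    ∑ τ, rateToH w a τ * f τ = ∑ τ, (w a τ * f a - w τ a * f τ) := by
  have hdiag : rateToH w a a = ∑ τ ∈ univ.erase a, w a τ := by
    rw [rateToH, if_pos rfl, filter_ne']
  have hoff : ∀ τ ∈ univ.erase a, rateToH w a τ * f τ = -(w τ a * f τ) := fun τ hτ => by
    rw [rateToH, if_neg (ne_of_mem_erase hτ).symm, neg_mul]
  rw [← add_sum_erase _ _ (mem_univ a), ← add_sum_erase _ _ (mem_univ a), hdiag,
    sum_congr rfl hoff, sum_neg_distrib, sum_sub_distrib, sum_mul]
  ring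

theorem sum_rateToH_mul_of_conserved {f : (Fin r → Fin m) → ℝ}
    (hf : ∀ τ τ', w τ τ' ≠ 0 → f τ' = f τ) (a : Fin r → Fin m) :
    ∑ τ, rateToH w a τ * f τ = (∑ τ, w a τ - ∑ τ, w τ a) * f a := by
  have hin : ∀ τ, w τ a * f τ = w τ a * f a := fun τ =>
    mul_eq_mul_left_iff.mpr (or_iff_not_imp_right.mpr fun hτ => (hf τ a hτ).symm)
  simp only [sum_rateToH_mul, hin, sum_sub_distrib, sub_mul, sum_mul]

end Rates

section ModelA

variable (p1 p2 : ℝ)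

theorem prod_eq_of_rateA_ne_zero {M : Type*} [CommMonoid M] (w : Fin 2 → M)
    {τ τ' : Fin 3 → Fin 2} (hτ : rateA p1 p2 τ τ' ≠ 0) :
    ∏ j, w (τ' j) = ∏ j, w (τ j) := by
  unfold rateA at hτ
  split_ifs at hτ with h₁ h₂ h₃
  · simp [h₁, Fin.prod_univ_three, mul_comm]
  · simp [h₂, Fin.prod_univ_three, mul_comm]
  · simp [h₃, Fin.prod_univ_three, mul_comm (w 1), mul_assoc]
  · exact absurd rfl hτ

theorem rateA_eq_add (τ τ' : Fin 3 → Fin 2) :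
    rateA p1 p2 τ τ' =
      (if τ = ![1, 0, 0] ∧ τ' = ![0, 1, 0] then p1 else 0) +
      (if τ = ![1, 0, 1] ∧ τ' = ![0, 1, 1] then p1 else 0) +
      (if τ = ![1, 0, 0] ∧ τ' = ![0, 0, 1] then p2 else 0) := by
  unfold rateA
  split_ifs <;> simp_all

theorem sum_rateA_from (a : Fin 3 → Fin 2) :
    ∑ τ, rateA p1 p2 a τ =
      (if a = ![1, 0, 0] then p1 else 0) + (if a = ![1, 0, 1] then p1 else 0) +
      (if a = ![1, 0, 0] then p2 else 0) := by
  simp [rateA_eq_add, sum_add_distrib, ite_and]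

theorem sum_rateA_to (a : Fin 3 → Fin 2) :
    ∑ τ, rateA p1 p2 τ a =
      (if a = ![0, 1, 0] then p1 else 0) + (if a = ![0, 1, 1] then p1 else 0) +
      (if a = ![0, 0, 1] then p2 else 0) := by
  simp [rateA_eq_add, sum_add_distrib, ite_and]

/-- The function `V` of two neighbouring sites whose discrete gradient along the ring is the escape
rate minus the entry rate of a three-site window of model A. -/
def potentialA (x : Fin 2 → Fin 2) : ℝ :=
  (if x 0 = 1 then p1 else 0) + (if x 0 = 1 ∨ x 1 = 1 then p2 else 0)

theorem sum_rateA_from_sub_sum_rateA_to (a : Fin 3 → Fin 2) :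
    ∑ τ, rateA p1 p2 a τ - ∑ τ, rateA p1 p2 τ a =
      potentialA p1 p2 (Fin.init a) - potentialA p1 p2 (Fin.tail a) := by
  rw [sum_rateA_from, sum_rateA_to]
  obtain ⟨x, y, z, rfl⟩ : ∃ x y z, a = ![x, y, z] :=
    ⟨a 0, a 1, a 2, by ext j; fin_cases j <;> rfl⟩
  fin_cases x <;> fin_cases y <;> fin_cases z <;> simp [potentialA, Fin.init, Fin.tail]

end ModelA

theorem modelA_periodic_product_measure_general (p1 p2 : ℝ) (w : Fin 2 → ℝ) {L : ℕ}
    (hL : 3 ≤ L) :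
    Hper L 2 3 (hA p1 p2) (fun σ => ∏ k, w (σ k)) = 0 := by
  refine Hper_prod_eq_zero_of_local_gradient hL (potentialA p1 p2) fun a => ?_
  rw [hA, sum_rateToH_mul_of_conserved (rateA p1 p2) (f := fun τ => ∏ j, w (τ j))
    (fun _ _ => prod_eq_of_rateA_ne_zero p1 p2 w), sum_rateA_from_sub_sum_rateA_to]

/-- **Stationary state of model A with periodic boundary conditions**: the Bernoulli
product measure with density `ρ` (weight `ρ` for an occupied site, `1-ρ` for an empty
site) is a zero-energy eigenvector of the periodic stochastic Hamiltonian of model A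
on a ring of `L ≥ 3` sites. -/
theorem modelA_periodic_product_measure (p1 p2 ρ : ℝ) (hp1 : 0 ≤ p1) (hp2 : 0 ≤ p2)
    (hρ : ρ ∈ Set.Icc (0 : ℝ) 1) (L : ℕ) (hL : 3 ≤ L) :
    Hper L 2 3 (hA p1 p2)
      (fun σ => ∏ k : Fin L, (if σ k = 1 then ρ else 1 - ρ)) = 0 :=
  modelA_periodic_product_measure_general p1 p2 (fun x => if x = 1 then ρ else 1 - ρ) hL
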